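/- Let p be a prime, k a perfect field of characteristic p, n ≥ 1, and E = 𝕎(k)⟦u_1, …, u_{n−1}⟧, with the convention u_0 = p. For 0 ≤ t < n set I_t = (u_0, u_1, …, u_{t−1}) ⊂ E, and let L_t be the I_t-adic completion of E[u_t^{−1}]. For integers 0 ≤ t' ≤ t < n, let L_{t',t} be the I_{t'}·L_t-adic completion of the localization L_t[u_{t'}^{−1}] (where I_{t'}·L_t denotes the ideal of L_t generated by the image of I_{t'}). Then L_{t',t} is a Noetherian ring and a normal domain, i.e., an integral domain integrally closed in its field of fractions. (This ring is the coefficient ring π₀L_{K(t')}L_{K(t)}E_n of the iterated localization of Morava E-theory at Morava K-theories.) -/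

import Mathlib

/-- The generators of Morava `E`-theory: `u 0 = p` and `u j = X (j - 1)` for `1 ≤ j ≤ n - 1`,
as elements of `E = 𝕎(k)⟦u_1, …, u_{n-1}⟧`. -/
noncomputable def MoravaGen (p : ℕ) [Fact p.Prime] (k : Type*) [CommRing k] (n : ℕ) (j : ℕ) :
    MvPowerSeries (Fin (n - 1)) (WittVector p k) :=
  if j = 0 then (p : MvPowerSeries (Fin (n - 1)) (WittVector p k))
  else if h : j - 1 < n - 1 then MvPowerSeries.X ⟨j - 1, h⟩ else 0

/-- The ring `L_t = π₀ L_{K(t)} E_n`: the `I_t`-adic completion of `E[u_t⁻¹]`, where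
`E = 𝕎(k)⟦u_1, …, u_{n-1}⟧` and `I_t = (u_0, …, u_{t-1})` with `u_0 = p`. -/
noncomputable abbrev MoravaLt (p : ℕ) [Fact p.Prime] (k : Type*) [CommRing k] (n t : ℕ) :=
  AdicCompletion
    (Ideal.map
      (algebraMap (MvPowerSeries (Fin (n - 1)) (WittVector p k))
        (Localization.Away (MoravaGen p k n t)))
      (Ideal.span (MoravaGen p k n '' Set.Iio t)))
    (Localization.Away (MoravaGen p k n t))

/-- The canonical ring map `E → L_t`. -/
noncomputable def MoravaLtMap (p : ℕ) [Fact p.Prime] (k : Type*) [CommRing k] (n t : ℕ) :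
    MvPowerSeries (Fin (n - 1)) (WittVector p k) →+* MoravaLt p k n t :=
  (algebraMap (Localization.Away (MoravaGen p k n t)) (MoravaLt p k n t)).comp
    (algebraMap (MvPowerSeries (Fin (n - 1)) (WittVector p k))
      (Localization.Away (MoravaGen p k n t)))

/-- The ring `L_{t',t} = π₀ L_{K(t')} L_{K(t)} E_n`: the `I_{t'}·L_t`-adic completion of the
localization `L_t[u_{t'}⁻¹]`. -/
noncomputable abbrev MoravaLtt (p : ℕ) [Fact p.Prime] (k : Type*) [CommRing k]
    (n t' t : ℕ) :=
  AdicCompletion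
    (Ideal.map
      ((algebraMap (MoravaLt p k n t)
          (Localization.Away (MoravaLtMap p k n t (MoravaGen p k n t')))).comp
        (MoravaLtMap p k n t))
      (Ideal.span (MoravaGen p k n '' Set.Iio t')))
    (Localization.Away (MoravaLtMap p k n t (MoravaGen p k n t')))

/-!
If `x` is a regular element in the Jacobson radical of a Noetherian ring `R` and `R ⧸ (x)` is a
normal domain, then so is `R`: by Krull's intersection theorem nonzero elements have finite
`x`-adic order, and a fraction which is almost integral over `R` is approximated `x`-adically by
elements of `R`. Applied repeatedly, this climbs down a weakly regular sequence `v` contained in the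
Jacobson radical: if `R ⧸ (v 0, …, v (N - 1))` is a normal domain, so is `R ⧸ (v 0, …, v (i - 1))`
for every `i ≤ N`.

Localization and completion are flat, so `u_0, u_1, …` remains weakly regular in `L_t` and
`L_{t',t}`. Completing at `I_t` moves `I_t` into the Jacobson radical, and `L_t ⧸ I_t` is the
localization away from `u_t` of `E ⧸ I_t`, hence a normal domain; therefore `L_t ⧸ I_i` is a normal
domain for `i ≤ t`. The passage from `L_t` to `L_{t',t}` is the same step, ending with `i = 0`.
-/

section Krull

variable {R : Type*} [CommRing R] [IsNoetherianRing R]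

theorem mem_of_forall_mem_sup_pow {I J : Ideal R} (hI : I ≤ Ideal.jacobson ⊥) {a : R}
    (ha : ∀ n, a ∈ J ⊔ I ^ n) : a ∈ J := by
  have := IsHausdorff.of_le_jacobson I (R ⧸ J) hI
  rw [← Ideal.Quotient.eq_zero_iff_mem]
  refine IsHausdorff.haus this _ fun n ↦ ?_
  obtain ⟨b, hb, c, hc, rfl⟩ := Submodule.mem_sup.1 (ha n)
  rw [map_add, Ideal.Quotient.eq_zero_iff_mem.2 hb, zero_add, SModEq.zero]
  have hc' : c • (1 : R ⧸ J) ∈ I ^ n • (⊤ : Submodule R (R ⧸ J)) :=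
    Submodule.smul_mem_smul hc Submodule.mem_top
  rwa [Algebra.smul_def, mul_one] at hc'

theorem finiteMultiplicity_of_mem_jacobson_bot {x a : R} (hx : x ∈ Ideal.jacobson (⊥ : Ideal R))
    (ha : a ≠ 0) : FiniteMultiplicity x a := by
  by_contra h
  rw [FiniteMultiplicity.not_iff_forall] at h
  apply ha
  rw [← Ideal.mem_bot]
  refine mem_of_forall_mem_sup_pow ((Ideal.span_singleton_le_iff_mem _).2 hx) fun n ↦ ?_
  rw [bot_sup_eq, Ideal.span_singleton_pow, Ideal.mem_span_singleton]
  exact h n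

theorem isDomain_of_isDomain_quotient_span_singleton {x : R}
    (hx : x ∈ Ideal.jacobson (⊥ : Ideal R)) (hreg : IsSMulRegular R x)
    [IsDomain (R ⧸ Ideal.span {x})] : IsDomain R := by
  have hP : (Ideal.span {x}).IsPrime := (Ideal.Quotient.isDomain_iff_prime _).1 inferInstance
  have : Nontrivial R := (Ideal.Quotient.mk (Ideal.span {x})).domain_nontrivial
  suffices NoZeroDivisors R from NoZeroDivisors.to_isDomain R
  refine ⟨fun {a b} hab ↦ ?_⟩
  by_contra! h
  obtain ⟨a', ha, hxa⟩ :=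
    (finiteMultiplicity_of_mem_jacobson_bot hx h.1).exists_eq_pow_mul_and_not_dvd
  obtain ⟨b', hb, hxb⟩ :=
    (finiteMultiplicity_of_mem_jacobson_bot hx h.2).exists_eq_pow_mul_and_not_dvd
  have hab' : a' * b' = 0 := by
    refine hreg.pow (multiplicity x a + multiplicity x b) ?_
    rw [ha, hb] at hab
    simpa [pow_add, mul_mul_mul_comm] using hab
  simp_rw [← Ideal.mem_span_singleton] at hxa hxb
  exact (hP.mem_or_mem (hab' ▸ zero_mem _)).elim hxa hxb

end Krull

/-- `AlmostDvd g f` says, without mentioning fractions, that `f / g` is almost integral over `R`: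
some nonzero `c` satisfies `c * (f / g) ^ m ∈ R` for all `m`. -/
def AlmostDvd {R : Type*} [CommRing R] (g f : R) : Prop :=
  ∃ c : R, c ≠ 0 ∧ ∀ m : ℕ, g ^ m ∣ c * f ^ m

section AlmostDvd

variable {R : Type*} [CommRing R]

theorem AlmostDvd.sub_mul {f g : R} (h : AlmostDvd g f) (r : R) : AlmostDvd g (f - g * r) := by
  obtain ⟨c, hc, hdvd⟩ := h
  refine ⟨c, hc, fun m ↦ ?_⟩
  rw [sub_eq_add_neg, add_pow, Finset.mul_sum]
  refine Finset.dvd_sum fun i hi ↦ ?_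
  have hm : g ^ m = g ^ i * g ^ (m - i) := by
    rw [← pow_add, Nat.add_sub_cancel' (Finset.mem_range_succ_iff.1 hi)]
  rw [hm, ← mul_assoc, ← mul_assoc, ← mul_neg, mul_pow]
  exact (mul_dvd_mul (hdvd i) (dvd_mul_right _ _)).mul_right _

theorem dvd_iff_exists_algebraMap_eq_div (K : Type*) [Field K] [Algebra R K] [IsFractionRing R K]
    {f g : R} (hg : g ≠ 0) :
    g ∣ f ↔ ∃ r, algebraMap R K r = algebraMap R K f / algebraMap R K g := by
  have hg' : algebraMap R K g ≠ 0 := by simpa using hg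
  refine exists_congr fun r ↦ ?_
  rw [eq_div_iff hg', ← map_mul, (IsFractionRing.injective R K).eq_iff, eq_comm, mul_comm]

variable [IsDomain R]

theorem almostDvd_iff_isAlmostIntegral_div (K : Type*) [Field K] [Algebra R K] [IsFractionRing R K]
    {f g : R} (hg : g ≠ 0) :
    AlmostDvd g f ↔ IsAlmostIntegral R (algebraMap R K f / algebraMap R K g) := by
  have hg' : algebraMap R K g ≠ 0 := by simpa using hg
  refine exists_congr fun c ↦ and_congr mem_nonZeroDivisors_iff_ne_zero.symm <|
    forall_congr' fun m ↦ exists_congr fun r ↦ ?_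
  rw [Algebra.smul_def, div_pow, mul_div_assoc', eq_div_iff (pow_ne_zero _ hg'),
    ← map_pow, ← map_pow, ← map_mul, ← map_mul, (IsFractionRing.injective R K).eq_iff, eq_comm,
    mul_comm r]

theorem isIntegrallyClosed_iff_dvd_of_almostDvd [IsNoetherianRing R] :
    IsIntegrallyClosed R ↔ ∀ ⦃f g : R⦄, g ≠ 0 → AlmostDvd g f → g ∣ f := by
  let K := FractionRing R
  rw [isIntegrallyClosed_iff K]
  constructor
  · intro h f g hg hfg
    rw [almostDvd_iff_isAlmostIntegral_div K hg, isAlmostIntegral_iff_isIntegral] at hfg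
    exact (dvd_iff_exists_algebraMap_eq_div K hg).2 (h hfg)
  · intro h z hz
    obtain ⟨f, g, hg, rfl⟩ := IsFractionRing.div_surjective R z
    have hg := nonZeroDivisors.ne_zero hg
    rw [← isAlmostIntegral_iff_isIntegral, ← almostDvd_iff_isAlmostIntegral_div K hg] at hz
    exact (dvd_iff_exists_algebraMap_eq_div K hg).1 (h hg hz)

theorem dvd_of_dvd_prime_pow_mul {x g a : R} (hx : Prime x) (hg : ¬ x ∣ g) {m : ℕ}
    (h : g ∣ x ^ m * a) : g ∣ a := by
  obtain ⟨r, hr⟩ := h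
  obtain ⟨s, rfl⟩ := hx.pow_dvd_of_dvd_mul_left m hg ⟨a, hr.symm⟩
  exact ⟨s, mul_left_cancel₀ (pow_ne_zero m hx.ne_zero) (by rw [hr]; ring)⟩

theorem AlmostDvd.of_mul_left {a f g : R} (ha : a ≠ 0) (h : AlmostDvd (a * g) (a * f)) :
    AlmostDvd g f := by
  obtain ⟨c, hc, hdvd⟩ := h
  refine ⟨c, hc, fun m ↦ (mul_dvd_mul_iff_left (pow_ne_zero m ha)).1 ?_⟩
  rw [mul_left_comm, ← mul_pow, ← mul_pow]
  exact hdvd m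

theorem AlmostDvd.of_prime_mul {x f g : R} (hx : Prime x) (hg : ¬ x ∣ g) (h : AlmostDvd g (x * f)) :
    AlmostDvd g f := by
  obtain ⟨c, hc, hdvd⟩ := h
  refine ⟨c, hc, fun i ↦ ?_⟩
  refine dvd_of_dvd_prime_pow_mul (m := i) hx (mt hx.dvd_of_dvd_pow hg) ?_
  rw [mul_left_comm, ← mul_pow]
  exact hdvd i

variable [IsNoetherianRing R] {x : R}

theorem AlmostDvd.map_mk (hx : Prime x) {f g : R} (hg : ¬ x ∣ g) (h : AlmostDvd g f) :
    AlmostDvd (Ideal.Quotient.mk (Ideal.span {x}) g) (Ideal.Quotient.mk (Ideal.span {x}) f) := by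
  obtain ⟨c, hc, hdvd⟩ := h
  obtain ⟨c', hcc', hxc'⟩ :=
    (FiniteMultiplicity.of_prime_left hx hc).exists_eq_pow_mul_and_not_dvd
  refine ⟨Ideal.Quotient.mk _ c', ?_, fun m ↦ ?_⟩
  · rwa [Ne, Ideal.Quotient.eq_zero_iff_mem, Ideal.mem_span_singleton]
  · have hm : g ^ m ∣ x ^ multiplicity x c * (c' * f ^ m) := by
      rw [← mul_assoc, ← hcc']
      exact hdvd m
    simpa only [map_mul, map_pow] using map_dvd (Ideal.Quotient.mk (Ideal.span {x}))
      (dvd_of_dvd_prime_pow_mul hx (mt hx.dvd_of_dvd_pow hg) hm)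

theorem AlmostDvd.exists_eq_mul_add_mul (hx : Prime x)
    [IsIntegrallyClosed (R ⧸ Ideal.span {x})] {f g : R} (hg : ¬ x ∣ g) (h : AlmostDvd g f) :
    ∃ q f', f = g * q + x * f' ∧ AlmostDvd g f' := by
  have : IsDomain (R ⧸ Ideal.span {x}) :=
    (Ideal.Quotient.isDomain_iff_prime _).2 ((Ideal.span_singleton_prime hx.ne_zero).2 hx)
  have hg0 : Ideal.Quotient.mk (Ideal.span {x}) g ≠ 0 := by
    rwa [Ne, Ideal.Quotient.eq_zero_iff_mem, Ideal.mem_span_singleton]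
  obtain ⟨q, hq⟩ := isIntegrallyClosed_iff_dvd_of_almostDvd.1 inferInstance hg0 (h.map_mk hx hg)
  obtain ⟨q, rfl⟩ := Ideal.Quotient.mk_surjective q
  rw [← map_mul, Ideal.Quotient.eq, Ideal.mem_span_singleton] at hq
  obtain ⟨f', hf'⟩ := hq
  refine ⟨q, f', by rw [← hf']; ring, AlmostDvd.of_prime_mul hx hg ?_⟩
  rw [← hf']
  exact h.sub_mul q

/- Iterating `exists_eq_mul_add_mul` gives `f ∈ (g) + (x ^ n)` for every `n`, and Krull's
intersection theorem for `R ⧸ (g)` then gives `f ∈ (g)`. -/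
theorem AlmostDvd.dvd_of_not_dvd (hx : Prime x) (hJ : x ∈ Ideal.jacobson (⊥ : Ideal R))
    [IsIntegrallyClosed (R ⧸ Ideal.span {x})] {f g : R}
    (hg : ¬ x ∣ g) (h : AlmostDvd g f) : g ∣ f := by
  rw [← Ideal.mem_span_singleton]
  refine mem_of_forall_mem_sup_pow ((Ideal.span_singleton_le_iff_mem _).2 hJ) fun n ↦ ?_
  rw [Ideal.span_singleton_pow, Ideal.mem_span_singleton_sup]
  induction n generalizing f with
  | zero => exact ⟨0, f, by simp, by simp⟩
  | succ n ih =>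
    obtain ⟨q, f', rfl, hf'⟩ := h.exists_eq_mul_add_mul hx hg
    obtain ⟨r, b, hb, rfl⟩ := ih hf'
    refine ⟨q + x * r, x * b, ?_, by ring⟩
    rw [Ideal.mem_span_singleton] at hb ⊢
    rw [pow_succ']
    exact mul_dvd_mul_left x hb

theorem AlmostDvd.prime_dvd (hx : Prime x) {f g : R} (h : AlmostDvd (x * g) f) :
    x ∣ f := by
  obtain ⟨c, hc, hdvd⟩ := h
  by_contra hf
  refine FiniteMultiplicity.not_iff_forall.2 (fun m ↦ ?_)
    (FiniteMultiplicity.of_prime_left hx hc)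
  have hm : x ^ m ∣ c * f ^ m := (pow_dvd_pow_of_dvd (dvd_mul_right x g) m).trans (hdvd m)
  exact hx.pow_dvd_of_dvd_mul_right m (mt hx.dvd_of_dvd_pow hf) hm

theorem isIntegrallyClosed_of_isIntegrallyClosed_quotient_span_singleton (hx : Prime x)
    (hJ : x ∈ Ideal.jacobson (⊥ : Ideal R)) [IsIntegrallyClosed (R ⧸ Ideal.span {x})] :
    IsIntegrallyClosed R := by
  refine isIntegrallyClosed_iff_dvd_of_almostDvd.2 fun f g hg h ↦ ?_
  obtain ⟨g', hgg', hxg'⟩ :=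
    (FiniteMultiplicity.of_prime_left hx hg).exists_eq_pow_mul_and_not_dvd
  rw [hgg'] at h ⊢
  generalize multiplicity x g = d at h ⊢
  induction d generalizing f with
  | zero =>
    rw [pow_zero, one_mul] at h ⊢
    exact h.dvd_of_not_dvd hx hJ hxg'
  | succ d ih =>
    rw [pow_succ', mul_assoc] at h ⊢
    obtain ⟨f', rfl⟩ := h.prime_dvd hx
    exact mul_dvd_mul_left x (ih f' (h.of_mul_left hx.ne_zero))

end AlmostDvd

/-- A normal domain: an integral domain integrally closed in its field of fractions. -/
structure IsNormalDomain (R : Type*) [CommRing R] : Prop where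
  isDomain : IsDomain R
  isIntegrallyClosed : IsIntegrallyClosed R

namespace IsNormalDomain

theorem of_ringEquiv {R S : Type*} [CommRing R] [CommRing S] (e : R ≃+* S)
    (h : IsNormalDomain R) : IsNormalDomain S :=
  have := h.isDomain
  have := h.isIntegrallyClosed
  ⟨e.symm.toMulEquiv.isDomain R, .of_equiv e⟩

theorem of_isLocalization {R S : Type*} [CommRing R] [CommRing S] [Algebra R S]
    (M : Submonoid R) [IsLocalization M S] (hM : M ≤ nonZeroDivisors R)
    (h : IsNormalDomain R) : IsNormalDomain S :=
  have := h.isDomain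
  have := h.isIntegrallyClosed
  ⟨IsLocalization.isDomain_of_le_nonZeroDivisors _ hM,
    isIntegrallyClosed_of_isLocalization _ M hM⟩

variable {R : Type*} [CommRing R] [IsNoetherianRing R]

theorem of_quotient_span_singleton {x : R} (hx : x ∈ Ideal.jacobson (⊥ : Ideal R))
    (hreg : IsSMulRegular R x) (h : IsNormalDomain (R ⧸ Ideal.span {x})) : IsNormalDomain R := by
  have := h.isDomain
  have := h.isIntegrallyClosed
  have := isDomain_of_isDomain_quotient_span_singleton hx hreg
  have hx0 : x ≠ 0 := fun h ↦ IsSMulRegular.not_zero (h ▸ hreg)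
  have hprime : Prime x :=
    (Ideal.span_singleton_prime hx0).1 ((Ideal.Quotient.isDomain_iff_prime _).1 inferInstance)
  exact ⟨this, isIntegrallyClosed_of_isIntegrallyClosed_quotient_span_singleton hprime hx⟩

theorem quotient_of_quotient_sup {I : Ideal R} {x : R} (hx : x ∈ Ideal.jacobson (⊥ : Ideal R))
    (hreg : IsSMulRegular (R ⧸ I) x) (h : IsNormalDomain (R ⧸ I ⊔ Ideal.span {x})) :
    IsNormalDomain (R ⧸ I) := by
  refine of_quotient_span_singleton (x := Ideal.Quotient.mk I x) ?_ ?_ ?_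
  · rw [← Ideal.mem_comap, Ideal.comap_jacobson_of_surjective Ideal.Quotient.mk_surjective]
    exact Ideal.jacobson_mono bot_le hx
  · exact (isSMulRegular_algebraMap_iff (R ⧸ I)).2 hreg
  · refine h.of_ringEquiv ((DoubleQuot.quotQuotEquivQuotSup I (Ideal.span {x})).symm.trans <|
      Ideal.quotEquivOfEq ?_)
    rw [Ideal.map_span, Set.image_singleton]

end IsNormalDomain

section RegularSequence

open RingTheory.Sequence

/-- The ideal generated by the first `i` members `v 0, …, v (i - 1)` of a sequence; for the
generators of Morava `E`-theory this is the ideal `I_i`. -/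
abbrev prefixIdeal {R : Type*} [CommRing R] (v : ℕ → R) (i : ℕ) : Ideal R :=
  Ideal.span (v '' Set.Iio i)

variable {R S : Type*} [CommRing R] [CommRing S]

theorem prefixIdeal_zero (v : ℕ → R) : prefixIdeal v 0 = ⊥ := by
  simp [prefixIdeal]

theorem prefixIdeal_succ (v : ℕ → R) (i : ℕ) :
    prefixIdeal v (i + 1) = prefixIdeal v i ⊔ Ideal.span {v i} := by
  rw [← Ideal.span_union, Set.union_singleton, ← Set.image_insert_eq,
    ← Order.Iio_succ_eq_insert, Nat.succ_eq_succ]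

theorem map_prefixIdeal (f : R →+* S) (v : ℕ → R) (i : ℕ) :
    (prefixIdeal v i).map f = prefixIdeal (f ∘ v) i := by
  rw [Ideal.map_span, Set.image_image]
  rfl

theorem ofList_map_range (v : ℕ → R) (i : ℕ) :
    Ideal.ofList ((List.range i).map v) = prefixIdeal v i := by
  rw [Ideal.ofList, prefixIdeal]
  congr 1
  ext
  simp

theorem isWeaklyRegular_map_range_iff (v : ℕ → R) (N : ℕ) :
    IsWeaklyRegular R ((List.range N).map v) ↔
      ∀ i < N, IsSMulRegular (R ⧸ prefixIdeal v i) (v i) := by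
  have hquot (i : ℕ) (hi : i < N) :
      (Ideal.ofList (((List.range N).map v).take i) • ⊤ : Submodule R R) = prefixIdeal v i := by
    rw [← List.map_take, List.take_range, min_eq_left hi.le, ofList_map_range, smul_eq_mul,
      Ideal.mul_top]
  simp only [isWeaklyRegular_iff, List.length_map, List.length_range, List.getElem_map,
    List.getElem_range]
  exact forall₂_congr fun i hi ↦ by rw [hquot i hi]

theorem isWeaklyRegular_map_range_comp_algebraMap [Algebra R S] [Module.Flat R S] {v : ℕ → R}
    {N : ℕ} (h : IsWeaklyRegular R ((List.range N).map v)) :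
    IsWeaklyRegular S ((List.range N).map (algebraMap R S ∘ v)) := by
  rw [← List.map_map]
  exact h.of_flat

theorem isNormalDomain_quotient_prefixIdeal [IsNoetherianRing R] {v : ℕ → R} {N : ℕ}
    (hv : IsWeaklyRegular R ((List.range N).map v)) (hJ : prefixIdeal v N ≤ Ideal.jacobson ⊥)
    (h : IsNormalDomain (R ⧸ prefixIdeal v N)) {i : ℕ} (hi : i ≤ N) :
    IsNormalDomain (R ⧸ prefixIdeal v i) := by
  rw [isWeaklyRegular_map_range_iff] at hv
  induction hi using Nat.decreasingInduction with
  | self => exact h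
  | of_succ i hi ih =>
    rw [prefixIdeal_succ] at ih
    exact .quotient_of_quotient_sup (hJ (Ideal.subset_span ⟨i, hi, rfl⟩)) (hv i hi) ih

end RegularSequence

section AdicCompletion

open AdicCompletion

theorem isAdicComplete_map_algebraMap {R : Type*} [CommRing R] {I : Ideal R} (hI : I.FG) :
    IsAdicComplete (I.map (algebraMap R (AdicCompletion I R))) (AdicCompletion I R) :=
  (IsAdicComplete.map_algebraMap_iff _ _).2 (AdicCompletion.isAdicComplete hI)

section Surjective

variable {A B : Type*} [CommRing A] [CommRing B]

/-- The `n`-th stage of `adicCompletionMap`: an element of the completion of `A` at `J` is sent to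
the image under `f` of its class modulo `J ^ n`. -/
noncomputable def adicCompletionMapMod (f : A →+* B) (J : Ideal A) (n : ℕ) :
    AdicCompletion J A →+* B ⧸ J.map f ^ n :=
  (Ideal.quotientMap (J.map f ^ n) f
    (Ideal.map_le_iff_le_comap.1 (Ideal.map_pow f J n).le)).comp (evalₐ J n).toRingHom

theorem factorPow_comp_adicCompletionMapMod (f : A →+* B) (J : Ideal A) {m n : ℕ} (hmn : m ≤ n) :
    (Ideal.Quotient.factorPow (J.map f) hmn).comp (adicCompletionMapMod f J n) =
      adicCompletionMapMod f J m := by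
  ext x
  induction x using induction_on with
  | h x =>
    simp only [adicCompletionMapMod, RingHom.comp_apply, AlgHom.toRingHom_eq_coe, RingHom.coe_coe,
      evalₐ_mk, Ideal.quotientMap_mk]
    refine Ideal.Quotient.eq.2 ?_
    rw [← map_sub, ← Ideal.map_pow]
    exact Ideal.mem_map_of_mem f (Ideal.Quotient.eq.1 (Ideal.mk_eq_mk J hmn x))

/-- The ring homomorphism between adic completions induced by a ring homomorphism `f : A →+* B`,
where `B` is completed at the extension of the ideal `J` of `A`. -/
noncomputable def adicCompletionMap (f : A →+* B) (J : Ideal A) :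
    AdicCompletion J A →+* AdicCompletion (J.map f) B :=
  liftRingHom (J.map f) (adicCompletionMapMod f J) (factorPow_comp_adicCompletionMapMod f J)

theorem adicCompletionMap_algebraMap (f : A →+* B) (J : Ideal A) (a : A) :
    adicCompletionMap f J (algebraMap A _ a) = algebraMap B _ (f a) :=
  ext_evalₐ fun n ↦
    evalₐ_liftRingHom _ _ (factorPow_comp_adicCompletionMapMod f J) n (algebraMap A _ a)

theorem adicCompletionMap_surjective {f : A →+* B} (hf : Function.Surjective f) {J : Ideal A}
    (hJ : J.FG) : Function.Surjective (adicCompletionMap f J) := by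
  have hcomp : (adicCompletionMap f J).comp (algebraMap A _) = (algebraMap B _).comp f :=
    RingHom.ext (adicCompletionMap_algebraMap f J)
  have hmap : (J.map (algebraMap A (AdicCompletion J A))).map (adicCompletionMap f J) =
      (J.map f).map (algebraMap B _) := by
    rw [Ideal.map_map, Ideal.map_map, hcomp]
  have := isAdicComplete_map_algebraMap hJ
  have := isAdicComplete_map_algebraMap (hJ.map f)
  have : IsHausdorff ((J.map (algebraMap A _)).map (adicCompletionMap f J))
    (AdicCompletion (J.map f) B) := hmap ▸ inferInstance
  refine surjective_of_mk_map_comp_surjective (I := J.map (algebraMap A _)) _ fun y ↦ ?_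
  obtain ⟨y, rfl⟩ := Ideal.Quotient.mk_surjective y
  obtain ⟨b, hb⟩ := Ideal.Quotient.mk_surjective (evalOneₐ (J.map f) y)
  obtain ⟨a, rfl⟩ := hf b
  refine ⟨algebraMap A _ a, ?_⟩
  rw [RingHom.comp_apply, Ideal.Quotient.eq, hmap, ← ker_evalOneₐ_eq_map _ (hJ.map f),
    RingHom.mem_ker, map_sub, sub_eq_zero, adicCompletionMap_algebraMap]
  exact hb

end Surjective

variable {R : Type*} [CommRing R] [IsNoetherianRing R] (I : Ideal R)

theorem isNoetherianRing_adicCompletion_idealOfVars (σ : Type*) [Finite σ] :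
    IsNoetherianRing (AdicCompletion (MvPolynomial.idealOfVars σ R) (MvPolynomial σ R)) :=
  isNoetherianRing_of_ringEquiv _ (MvPowerSeries.toAdicCompletionAlgEquiv σ R).toRingEquiv

/- Generators of `I` present `R` as a quotient of a polynomial ring, so that the completion of `R`
is a quotient of a power series ring. -/
theorem isNoetherianRing_adicCompletion : IsNoetherianRing (AdicCompletion I R) := by
  obtain ⟨m, a, ha⟩ := Submodule.fg_iff_exists_fin_generating_family.1 (IsNoetherian.noetherian I)
  let ev : MvPolynomial (Fin m) R →+* R := (MvPolynomial.aeval a).toRingHom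
  have hev : Function.Surjective ev := fun r ↦ ⟨MvPolynomial.C r, by simp [ev]⟩
  have hI : (MvPolynomial.idealOfVars (Fin m) R).map ev = I := by
    rw [Ideal.map_span, ← Set.range_comp, ← ha]
    congr 2
    ext i
    simp [ev]
  have := isNoetherianRing_adicCompletion_idealOfVars (R := R) (Fin m)
  rw [← hI]
  exact isNoetherianRing_of_surjective _ _ _
    (adicCompletionMap_surjective hev (MvPolynomial.idealOfVars_fg _ _))

theorem map_le_jacobson_bot_adicCompletion :
    I.map (algebraMap R (AdicCompletion I R)) ≤ Ideal.jacobson ⊥ :=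
  have := isAdicComplete_map_algebraMap (IsNoetherian.noetherian I)
  IsAdicComplete.le_jacobson_bot _

/-- The residue ring of `AdicCompletion I R` modulo `I` is that of `R`. -/
noncomputable def quotientEquivAdicCompletionQuotientMap :
    R ⧸ I ≃+* AdicCompletion I R ⧸ I.map (algebraMap R (AdicCompletion I R)) :=
  (RingHom.quotientKerEquivOfSurjective (f := (evalOneₐ I).toRingHom)
    (evalOneₐ_surjective I)).symm.trans
      (Ideal.quotEquivOfEq (ker_evalOneₐ_eq_map I (IsNoetherian.noetherian I)))

end AdicCompletion

section CompletedAway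

/-- The completion at `I` of the localization of `R` away from `x`. Both `L_t` and `L_{t',t}` are
rings of this form. -/
abbrev CompletedAway {R : Type*} [CommRing R] (I : Ideal R) (x : R) : Type _ :=
  AdicCompletion (I.map (algebraMap R (Localization.Away x))) (Localization.Away x)

namespace CompletedAway

variable {R : Type*} [CommRing R] (I : Ideal R) (x : R)

theorem map_algebraMap (J : Ideal R) :
    J.map (algebraMap R (CompletedAway I x)) =
      (J.map (algebraMap R (Localization.Away x))).map (algebraMap _ (CompletedAway I x)) := by
  rw [Ideal.map_map, ← IsScalarTower.algebraMap_eq]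

variable [IsNoetherianRing R]

instance isNoetherianRing : IsNoetherianRing (CompletedAway I x) :=
  have : IsNoetherianRing (Localization.Away x) :=
    IsLocalization.isNoetherianRing (Submonoid.powers x) _ inferInstance
  isNoetherianRing_adicCompletion _

instance flat : Module.Flat R (CompletedAway I x) :=
  have : IsNoetherianRing (Localization.Away x) :=
    IsLocalization.isNoetherianRing (Submonoid.powers x) _ inferInstance
  have : Module.Flat R (Localization.Away x) := IsLocalization.flat _ (Submonoid.powers x)
  .trans R (Localization.Away x) _

theorem map_le_jacobson_bot : I.map (algebraMap R (CompletedAway I x)) ≤ Ideal.jacobson ⊥ := by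
  rw [map_algebraMap]
  exact map_le_jacobson_bot_adicCompletion _

variable {I x}

theorem isNormalDomain_quotient_map (h : IsNormalDomain (R ⧸ I)) (hx : x ∉ I) :
    IsNormalDomain (CompletedAway I x ⧸ I.map (algebraMap R (CompletedAway I x))) := by
  have := h.isDomain
  have hM : Algebra.algebraMapSubmonoid (R ⧸ I) (Submonoid.powers x) ≤
      nonZeroDivisors (R ⧸ I) := by
    rw [Algebra.algebraMapSubmonoid_powers]
    exact powers_le_nonZeroDivisors_of_noZeroDivisors (mt Ideal.Quotient.eq_zero_iff_mem.1 hx)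
  rw [map_algebraMap]
  exact (h.of_isLocalization _ hM).of_ringEquiv (quotientEquivAdicCompletionQuotientMap _)

end CompletedAway

open RingTheory.Sequence in
theorem isNormalDomain_completedAway_quotient {R : Type*} [CommRing R] [IsNoetherianRing R]
    {v : ℕ → R} {N s : ℕ} (hv : IsWeaklyRegular R ((List.range N).map v)) (hs : s < N)
    (h : IsNormalDomain (R ⧸ prefixIdeal v s)) {i : ℕ} (hi : i ≤ s) :
    IsNormalDomain (CompletedAway (prefixIdeal v s) (v s) ⧸
      prefixIdeal (algebraMap R (CompletedAway (prefixIdeal v s) (v s)) ∘ v) i) := by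
  rw [isWeaklyRegular_map_range_iff] at hv
  have hmem : v s ∉ prefixIdeal v s := fun hmem ↦ by
    have := h.isDomain
    refine IsSMulRegular.not_zero (M := R ⧸ prefixIdeal v s) (R := R ⧸ prefixIdeal v s) ?_
    rw [← Ideal.Quotient.eq_zero_iff_mem.2 hmem]
    exact (isSMulRegular_algebraMap_iff (R ⧸ prefixIdeal v s)).2 (hv s hs)
  have hreg := isWeaklyRegular_map_range_comp_algebraMap
    (S := CompletedAway (prefixIdeal v s) (v s))
    ((isWeaklyRegular_map_range_iff v s).2 fun j hj ↦ hv j (hj.trans hs))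
  refine isNormalDomain_quotient_prefixIdeal hreg ?_ ?_ hi
  · rw [← map_prefixIdeal]
    exact CompletedAway.map_le_jacobson_bot _ _
  · rw [← map_prefixIdeal]
    exact CompletedAway.isNormalDomain_quotient_map h hmem

end CompletedAway

section PowerSeries

open MvPowerSeries

variable {σ R : Type*} [CommRing R] {a : R} {S : Set σ}

theorem C_dvd_iff_forall_dvd_coeff {f : MvPowerSeries σ R} : C a ∣ f ↔ ∀ m, a ∣ coeff m f := by
  refine ⟨?_, fun h ↦ ?_⟩
  · rintro ⟨g, rfl⟩ m
    rw [coeff_C_mul]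
    exact dvd_mul_right _ _
  · choose g hg using h
    exact ⟨g, MvPowerSeries.ext fun m ↦ (hg m).trans (coeff_C_mul m g a).symm⟩

theorem exists_X_dvd_sub (j : σ) (f : MvPowerSeries σ R) :
    ∃ f₀, X j ∣ f - f₀ ∧ ∀ m, m j ≠ 0 → coeff m f₀ = 0 := by
  classical
  let f₀ : MvPowerSeries σ R := fun m ↦ if m j = 0 then coeff m f else 0
  refine ⟨f₀, X_dvd_iff.2 fun m hm ↦ ?_, fun m hm ↦ if_neg hm⟩
  rw [map_sub, sub_eq_zero]
  exact (if_pos hm).symm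

theorem mem_span_insert_C_image_X_iff (hS : S.Finite) {f : MvPowerSeries σ R} :
    f ∈ Ideal.span (insert (C a) (X '' S)) ↔ ∀ m, (∀ j ∈ S, m j = 0) → a ∣ coeff m f := by
  induction S, hS using Set.Finite.induction_on generalizing f with
  | empty => simp [Ideal.mem_span_singleton, C_dvd_iff_forall_dvd_coeff]
  | @insert j S _ _ ih =>
    rw [Set.image_insert_eq, Set.insert_comm, Ideal.mem_span_insert]
    simp_rw [Set.forall_mem_insert]
    constructor
    · rintro ⟨g, f₀, hf₀, rfl⟩ m ⟨hj, hm⟩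
      rw [map_add, X_dvd_iff.1 (dvd_mul_left (X j) g) m hj, zero_add]
      exact ih.1 hf₀ m hm
    · intro h
      obtain ⟨f₀, ⟨g, hg⟩, hf₀⟩ := exists_X_dvd_sub j f
      refine ⟨g, f₀, ih.2 fun m hm ↦ ?_, by rw [mul_comm, ← hg, sub_add_cancel]⟩
      by_cases hj : m j = 0
      · have hcoeff := X_dvd_iff.1 ⟨g, hg⟩ m hj
        rw [map_sub, sub_eq_zero] at hcoeff
        exact hcoeff ▸ h m ⟨hj, hm⟩
      · rw [hf₀ m hj]
        exact dvd_zero a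

theorem isSMulRegular_X_quotient_span_insert_C_image_X (hS : S.Finite) {j : σ} (hj : j ∉ S) :
    IsSMulRegular (MvPowerSeries σ R ⧸ Ideal.span (insert (C a) (X '' S)))
      (X j : MvPowerSeries σ R) := by
  refine (isSMulRegular_quotient_iff_mem_of_smul_mem _ _).2 fun f hf ↦ ?_
  rw [mem_span_insert_C_image_X_iff hS] at hf ⊢
  intro m hm
  have hne (i : σ) (hi : i ∈ S) : i ≠ j := fun h ↦ hj (h ▸ hi)
  have hdvd := hf (Finsupp.single j 1 + m) fun i hi ↦ by simp [hm i hi, hne i hi]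
  rwa [smul_eq_mul, X_def, coeff_add_monomial_mul, one_mul] at hdvd

theorem span_insert_C_range_X [Finite σ] :
    Ideal.span (insert (C a) (Set.range X)) =
      (Ideal.span {a}).comap (constantCoeff (σ := σ) (R := R)) := by
  ext f
  rw [← Set.image_univ, mem_span_insert_C_image_X_iff Set.finite_univ, Ideal.mem_comap,
    Ideal.mem_span_singleton, ← coeff_zero_eq_constantCoeff_apply]
  refine ⟨fun h ↦ h 0 (by simp), fun h m hm ↦ ?_⟩
  obtain rfl : m = 0 := Finsupp.ext fun j ↦ hm j trivial
  exact h

end PowerSeries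

section MoravaGen

open RingTheory.Sequence

variable (p : ℕ) [Fact p.Prime] (k : Type*)

theorem moravaGen_zero [CommRing k] (n : ℕ) :
    MoravaGen p k n 0 = MvPowerSeries.C (p : WittVector p k) := by
  simp [MoravaGen]

theorem moravaGen_succ [CommRing k] {n s : ℕ} (hs : s < n - 1) :
    MoravaGen p k n (s + 1) = MvPowerSeries.X ⟨s, hs⟩ := by
  simp [MoravaGen, hs]

theorem prefixIdeal_moravaGen_succ [CommRing k] {n s : ℕ} (hs : s < n) :
    prefixIdeal (MoravaGen p k n) (s + 1) =
      Ideal.span (insert (MvPowerSeries.C (p : WittVector p k))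
        (MvPowerSeries.X '' {j : Fin (n - 1) | j.val < s})) := by
  induction s with
  | zero => simp [prefixIdeal_succ, prefixIdeal_zero, moravaGen_zero]
  | succ s ih =>
    have hs' : s < n - 1 := by lia
    have hset : {j : Fin (n - 1) | j.val < s + 1} = insert ⟨s, hs'⟩ {j | j.val < s} := by
      ext j
      simp [Fin.ext_iff, le_iff_eq_or_lt]
    rw [prefixIdeal_succ, ih (by lia), moravaGen_succ p k hs', hset, Set.image_insert_eq,
      Set.insert_comm, Ideal.span_insert _ (insert _ _), sup_comm]

variable [Field k] [CharP k p]

theorem isWeaklyRegular_moravaGen (n : ℕ) :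
    IsWeaklyRegular (MvPowerSeries (Fin (n - 1)) (WittVector p k))
      ((List.range n).map (MoravaGen p k n)) := by
  refine (isWeaklyRegular_map_range_iff _ n).2 fun i hi ↦ ?_
  cases i with
  | zero =>
    refine (isSMulRegular_quotient_iff_mem_of_smul_mem _ _).2 fun f hf ↦ ?_
    rw [prefixIdeal_zero, Ideal.mem_bot, moravaGen_zero, smul_eq_mul, mul_eq_zero] at hf
    rw [prefixIdeal_zero, Ideal.mem_bot]
    refine hf.resolve_left fun hC ↦ WittVector.p_nonzero p k ?_
    exact MvPowerSeries.C_injective (hC.trans (map_zero _).symm)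
  | succ s =>
    rw [prefixIdeal_moravaGen_succ p k (by lia), moravaGen_succ p k (by lia)]
    exact isSMulRegular_X_quotient_span_insert_C_image_X (Set.toFinite _) (by simp)

variable [PerfectRing k p]

theorem isMaximal_prefixIdeal_moravaGen {n : ℕ} (hn : 1 ≤ n) :
    (prefixIdeal (MoravaGen p k n) n).IsMaximal := by
  obtain ⟨s, rfl⟩ := Nat.exists_eq_add_of_le' hn
  have huniv : {j : Fin (s + 1 - 1) | j.val < s} = Set.univ :=
    Set.eq_univ_of_forall fun j ↦ j.isLt
  rw [prefixIdeal_moravaGen_succ p k (Nat.lt_succ_self s), huniv, Set.image_univ,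
    span_insert_C_range_X, ← (WittVector.irreducible p).maximalIdeal_eq]
  exact Ideal.comap_isMaximal_of_surjective _ fun c ↦
    ⟨MvPowerSeries.C c, MvPowerSeries.constantCoeff_C c⟩

theorem isNormalDomain_quotient_prefixIdeal_moravaGen {n : ℕ} (hn : 1 ≤ n) {i : ℕ} (hi : i ≤ n) :
    IsNormalDomain (MvPowerSeries (Fin (n - 1)) (WittVector p k) ⧸
      prefixIdeal (MoravaGen p k n) i) := by
  have hmax := isMaximal_prefixIdeal_moravaGen p k hn
  let _ := Ideal.Quotient.field (prefixIdeal (MoravaGen p k n) n)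
  refine isNormalDomain_quotient_prefixIdeal (isWeaklyRegular_moravaGen p k n) ?_
    ⟨inferInstance, inferInstance⟩ hi
  rw [IsLocalRing.jacobson_eq_maximalIdeal ⊥ bot_ne_top, IsLocalRing.eq_maximalIdeal hmax]

end MoravaGen

/-- For `0 ≤ t' ≤ t < n`, the ring `L_{t',t} = π₀ L_{K(t')} L_{K(t)} E_n` is a Noetherian
integrally closed integral domain. -/
theorem Ltt_is_noetherian_normal_domain (p : ℕ) [Fact p.Prime] (k : Type*) [Field k]
    [CharP k p] [PerfectField k] (n : ℕ) (hn : 1 ≤ n) (t' t : ℕ) (ht' : t' ≤ t)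
    (ht : t < n) :
    IsNoetherianRing (MoravaLtt p k n t' t) ∧ IsDomain (MoravaLtt p k n t' t) ∧
      IsIntegrallyClosed (MoravaLtt p k n t' t) := by
  have : ExpChar k p := ExpChar.prime Fact.out
  have : PerfectRing k p := PerfectField.toPerfectRing p
  have hL := isNormalDomain_completedAway_quotient (isWeaklyRegular_moravaGen p k n) ht
    (isNormalDomain_quotient_prefixIdeal_moravaGen p k hn ht.le) ht'
  have hreg := isWeaklyRegular_map_range_comp_algebraMap (S := MoravaLt p k n t)
    (isWeaklyRegular_moravaGen p k n)
  have hLtt := isNormalDomain_completedAway_quotient hreg (ht'.trans_lt ht) hL t'.zero_le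
  rw [prefixIdeal_zero] at hLtt
  have h := hLtt.of_ringEquiv (RingEquiv.quotientBot _)
  unfold MoravaLtt
  rw [← Ideal.map_map, map_prefixIdeal (MoravaLtMap p k n t)]
  exact ⟨CompletedAway.isNoetherianRing _ _, h.isDomain, h.isIntegrallyClosed⟩
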